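/- For every a > 0 there exist constants C > 0 and β > 0 such that for every integer M ≥ 1 and every real λ ≥ a, one has | 1/λ − Σ_{k=−M}^{M} c_k e^{−t_k λ} | ≤ C e^{−β √M}, where 𝔥 = π/√M, t_k = e^{k𝔥} and c_k = 𝔥 t_k. -/

import Mathlib

open Real

/-!
Substituting `t = e^u` in `1 / l = ∫ e^{-l t} dt` gives the integral over `ℝ` of
`e^u exp (-l e^u)`, and the quadrature is its truncated trapezoidal rule with step `h`. By Poisson
summation, the error of the full rule is the sum of the Fourier transform over the nonzero multiples
of `1 / h`. This transform is the Gamma function on the line `re s = 1`, up to a factor of modulus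
`1 / l`, so by the reflection formula it is `O(e^{-(π ^ 2 / 2) |ξ|})`, and the discretization error
is `O(e^{-π ^ 2 / (2 h)})`. The integrand is `O(e^{-|u|})`, hence truncating at `|k| ≤ M` costs
`O(e^{-h M})`. The step `h = π / √M` makes both exponents multiples of `√M`.
-/

open Filter FourierTransform MeasureTheory Asymptotics

section GeometricTails

variable {E : Type*} [NormedAddCommGroup E] [CompleteSpace E] {G : ℤ → E} {K c : ℝ}

lemma summable_int_of_norm_le_exp_neg_abs (hc : 0 < c)
    (hG : ∀ n : ℤ, ‖G n‖ ≤ K * exp (-c * |(n : ℝ)|)) : Summable G := by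
  have hexp : Summable fun n : ℕ => exp (-c * (n : ℝ)) := by
    simpa only [mul_comm] using summable_exp_nat_mul_iff.mpr (neg_lt_zero.mpr hc)
  refine Summable.of_norm_bounded (Summable.mul_left K ?_) hG
  apply Summable.of_nat_of_neg <;> simpa using hexp

lemma sum_Icc_neg_succ {A : Type*} [AddCommMonoid A] (G : ℤ → A) (n : ℕ) :
    ∑ k ∈ Finset.Icc (-((n + 1 : ℕ) : ℤ)) ((n + 1 : ℕ) : ℤ), G k =
      ∑ k ∈ Finset.Icc (-(n : ℤ)) (n : ℤ), G k + (G (-(n + 1)) + G (n + 1)) := by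
  push_cast
  rw [Finset.Icc_succ_succ, Finset.sum_union (by simp), Finset.sum_pair (by lia)]

lemma norm_sum_Icc_sub_tsum_le_exp (hc : 0 < c)
    (hG : ∀ n : ℤ, ‖G n‖ ≤ K * exp (-c * |(n : ℝ)|)) (N : ℕ) :
    ‖∑ n ∈ Finset.Icc (-(N : ℤ)) (N : ℤ), G n - ∑' n, G n‖ ≤
      2 * K * exp (-c * N) / (exp c - 1) := by
  have hlim : Tendsto (fun N : ℕ => ∑ n ∈ Finset.Icc (-(N : ℤ)) (N : ℤ), G n) atTop
      (nhds (∑' n, G n)) :=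
    (summable_int_of_norm_le_exp_neg_abs hc hG).hasSum.comp Finset.tendsto_Icc_neg
  have hstep (n : ℕ) : dist (∑ k ∈ Finset.Icc (-(n : ℤ)) (n : ℤ), G k)
      (∑ k ∈ Finset.Icc (-((n + 1 : ℕ) : ℤ)) ((n + 1 : ℕ) : ℤ), G k) ≤
        2 * K * exp (-c) * exp (-c) ^ n := by
    have habs : |(n : ℝ) + 1| = n + 1 := abs_of_nonneg (by positivity)
    have hneg : ‖G (-(n + 1))‖ ≤ K * exp (-c * (n + 1)) := by
      simpa [← neg_add_rev, add_comm, habs] using hG (-(n + 1))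
    have hpos : ‖G (n + 1)‖ ≤ K * exp (-c * (n + 1)) := by
      simpa [habs] using hG (n + 1)
    rw [sum_Icc_neg_succ, dist_self_add_right]
    calc ‖G (-(n + 1)) + G (n + 1)‖ ≤ K * exp (-c * (n + 1)) + K * exp (-c * (n + 1)) :=
          norm_add_le_of_le hneg hpos
      _ = 2 * K * exp (-c) * exp (-c) ^ n := by
          rw [← exp_nat_mul, mul_assoc (2 * K), ← exp_add]
          ring_nf
  have hratio : exp (-c) < 1 := by simpa using hc
  have hexp : 1 < exp c := one_lt_exp_iff.mpr hc
  calc ‖∑ n ∈ Finset.Icc (-(N : ℤ)) (N : ℤ), G n - ∑' n, G n‖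
      ≤ 2 * K * exp (-c) * exp (-c) ^ N / (1 - exp (-c)) := by
        simpa only [dist_eq_norm] using dist_le_of_le_geometric_of_tendsto _ _ hratio hstep hlim N
    _ = 2 * K * exp (-c * N) / (exp c - 1) := by
        rw [← exp_nat_mul, mul_comm (N : ℝ), exp_neg c]
        field_simp [(sub_pos.mpr hexp).ne']

end GeometricTails

section Trapezoid

variable {f : ℝ → ℂ} {h : ℝ}

lemma fourier_comp_mul_right {E : Type*} [NormedAddCommGroup E] [NormedSpace ℂ E]
    (f : ℝ → E) (hh : h ≠ 0) (ξ : ℝ) :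
    𝓕 (fun x => f (x * h)) ξ = |h⁻¹| • 𝓕 f (ξ / h) := by
  have hphase (x : ℝ) : -2 * π * (x * h) * (ξ / h) = -2 * π * x * ξ := by field_simp
  simp only [fourier_real_eq_integral_exp_smul]
  rw [← Measure.integral_comp_mul_right]
  simp only [hphase]

lemma isBigO_rpow_cocompact_of_norm_le_exp {E : Type*} [Norm E] {f : ℝ → E} {A α : ℝ}
    (hα : 0 < α) (hf : ∀ x, ‖f x‖ ≤ A * exp (-α * |x|)) (b : ℝ) :
    f =O[cocompact ℝ] fun x => |x| ^ b := by
  have hexp : f =O[cocompact ℝ] fun x => exp (-α * |x|) :=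
    .of_bound A (.of_forall fun x => by simpa using hf x)
  exact hexp.trans
    ((isLittleO_exp_neg_mul_rpow_atTop hα b).isBigO.comp_tendsto tendsto_norm_cocompact_atTop)

lemma tsum_mul_comp_mul_eq_tsum_fourier_div (hh : 0 < h) (hc : Continuous f) {b : ℝ} (hb : 1 < b)
    (hf : f =O[cocompact ℝ] fun x => |x| ^ (-b))
    (hF : Summable fun n : ℤ => 𝓕 f (n / h)) :
    ∑' n : ℤ, h * f (n * h) = ∑' n : ℤ, 𝓕 f (n / h) := by
  have hdilate : (fun x => f (x * h)) =O[cocompact ℝ] fun x => |x| ^ (-b) := by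
    have hproper : Tendsto (fun x => x * h) (cocompact ℝ) (cocompact ℝ) :=
      (Homeomorph.mulRight₀ h hh.ne').isClosedEmbedding.tendsto_cocompact
    refine (hf.comp_tendsto hproper).trans
      (.of_bound (h ^ (-b)) (.of_forall fun x => le_of_eq ?_))
    simp [abs_mul, mul_rpow, abs_of_pos hh, abs_of_nonneg, rpow_nonneg, hh.le, mul_comm]
  have hfourier (n : ℤ) : 𝓕 (fun x => f (x * h)) n = (h⁻¹ : ℂ) * 𝓕 f (n / h) := by
    rw [fourier_comp_mul_right f hh.ne', abs_of_pos (inv_pos.mpr hh), Complex.real_smul,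
      Complex.ofReal_inv]
  have hpoisson : ∑' n : ℤ, f (n * h) = ∑' n : ℤ, (h⁻¹ : ℂ) * 𝓕 f (n / h) := by
    have hsum : Summable fun n : ℤ => 𝓕 (fun x => f (x * h)) n := by
      simpa only [hfourier] using hF.mul_left _
    have hcont : Continuous fun x => f (x * h) := hc.comp (continuous_mul_const h)
    simpa [hfourier] using tsum_eq_tsum_fourier_of_rpow_decay_of_summable hcont hb hdilate hsum 0
  rw [tsum_mul_left, hpoisson, tsum_mul_left,
    mul_inv_cancel_left₀ (Complex.ofReal_ne_zero.mpr hh.ne')]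

variable {A B α β : ℝ}

lemma norm_integral_sub_tsum_trapezoid_le (hh : 0 < h) (hα : 0 < α) (hβ : 0 < β)
    (hc : Continuous f) (hf : ∀ x, ‖f x‖ ≤ A * exp (-α * |x|))
    (hF : ∀ ξ, ‖𝓕 f ξ‖ ≤ B * exp (-β * |ξ|)) :
    ‖(∫ x, f x) - ∑' n : ℤ, h * f (n * h)‖ ≤ 2 * B / (exp (β / h) - 1) := by
  have hsample (n : ℤ) : ‖𝓕 f (n / h)‖ ≤ B * exp (-(β / h) * |(n : ℝ)|) := by
    convert! hF (n / h) using 3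
    rw [abs_div, abs_of_pos hh]
    ring
  have hzero : 𝓕 f 0 = ∫ x, f x := by simp [fourier_real_eq_integral_exp_smul]
  rw [tsum_mul_comp_mul_eq_tsum_fourier_div hh hc one_lt_two
    (isBigO_rpow_cocompact_of_norm_le_exp hα hf _)
    (summable_int_of_norm_le_exp_neg_abs (div_pos hβ hh) hsample)]
  simpa [hzero] using norm_sum_Icc_sub_tsum_le_exp (div_pos hβ hh) hsample 0

lemma norm_sum_Icc_sub_tsum_trapezoid_le (hh : 0 < h) (hα : 0 < α)
    (hf : ∀ x, ‖f x‖ ≤ A * exp (-α * |x|)) (N : ℕ) :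
    ‖∑ n ∈ Finset.Icc (-(N : ℤ)) (N : ℤ), h * f (n * h) - ∑' n : ℤ, h * f (n * h)‖ ≤
      2 * A / α * exp (-α * h * N) := by
  have hA : 0 ≤ A := by simpa using (norm_nonneg _).trans (hf 0)
  have hαh : 0 < α * h := mul_pos hα hh
  have hsample (n : ℤ) : ‖h * f (n * h)‖ ≤ h * A * exp (-(α * h) * |(n : ℝ)|) := by
    rw [norm_mul, Complex.norm_of_nonneg hh.le, mul_assoc]
    gcongr
    convert! hf (n * h) using 3
    rw [abs_mul, abs_of_pos hh]
    ring
  calc ‖∑ n ∈ Finset.Icc (-(N : ℤ)) (N : ℤ), h * f (n * h) - ∑' n : ℤ, h * f (n * h)‖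
      ≤ 2 * (h * A) * exp (-(α * h) * N) / (exp (α * h) - 1) :=
        norm_sum_Icc_sub_tsum_le_exp hαh hsample N
    _ ≤ 2 * (h * A) * exp (-(α * h) * N) / (α * h) := by
        gcongr
        linarith [add_one_le_exp (α * h)]
    _ = 2 * A / α * exp (-α * h * N) := by
        rw [← neg_mul]
        field_simp

theorem norm_integral_sub_sum_trapezoid_le (hh : 0 < h) (hα : 0 < α) (hβ : 0 < β)
    (hc : Continuous f) (hf : ∀ x, ‖f x‖ ≤ A * exp (-α * |x|))
    (hF : ∀ ξ, ‖𝓕 f ξ‖ ≤ B * exp (-β * |ξ|)) (N : ℕ) :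
    ‖(∫ x, f x) - ∑ n ∈ Finset.Icc (-(N : ℤ)) (N : ℤ), h * f (n * h)‖ ≤
      2 * B / (exp (β / h) - 1) + 2 * A / α * exp (-α * h * N) := by
  refine (norm_sub_le_norm_sub_add_norm_sub _ (∑' n : ℤ, h * f (n * h)) _).trans ?_
  rw [norm_sub_rev (∑' n : ℤ, h * f (n * h))]
  exact add_le_add (norm_integral_sub_tsum_trapezoid_le hh hα hβ hc hf hF)
    (norm_sum_Icc_sub_tsum_trapezoid_le hh hα hf N)

end Trapezoid

section Gamma

lemma self_div_sinh_le (u : ℝ) : u / sinh u ≤ 2 * exp (-|u| / 2) := by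
  wlog hu : 0 < u generalizing u
  · rcases (not_lt.mp hu).eq_or_lt with rfl | hneg
    · simp
    · simpa [neg_div_neg_eq] using this (-u) (neg_pos.mpr hneg)
  have hsinh : u / 2 ≤ sinh (u / 2) := self_le_sinh_iff.mpr (by positivity)
  have hcosh : exp (u / 2) / 2 ≤ cosh (u / 2) := by
    rw [cosh_eq]
    gcongr
    linarith [exp_pos (-(u / 2))]
  rw [abs_of_pos hu, div_le_iff₀ (sinh_pos_iff.mpr hu)]
  calc u = 4 * exp (-u / 2) * (u / 2 * (exp (u / 2) / 2)) := by
        rw [neg_div, exp_neg]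
        field_simp
        norm_num
    _ ≤ 4 * exp (-u / 2) * (sinh (u / 2) * cosh (u / 2)) := by gcongr
    _ = 2 * exp (-u / 2) * sinh u := by
        rw [← mul_div_cancel₀ u two_ne_zero, sinh_two_mul]
        ring_nf

lemma norm_Gamma_one_add_mul_I_sq {y : ℝ} (hy : y ≠ 0) :
    ‖Complex.Gamma (1 + y * Complex.I)‖ ^ 2 = π * y / sinh (π * y) := by
  have hyI : (y : ℂ) * Complex.I ≠ 0 := by simp [hy]
  have hsinh : Complex.sinh (π * y) ≠ 0 := by
    exact_mod_cast sinh_ne_zero.mpr (mul_ne_zero pi_ne_zero hy)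
  have hconj : starRingEnd ℂ (Complex.Gamma (1 + y * Complex.I)) =
      Complex.Gamma (1 - y * Complex.I) := by
    simp [← Complex.Gamma_conj, sub_eq_add_neg]
  apply Complex.ofReal_injective
  push_cast
  calc (‖Complex.Gamma (1 + y * Complex.I)‖ : ℂ) ^ 2
      = Complex.Gamma (y * Complex.I + 1) * Complex.Gamma (1 - y * Complex.I) := by
        rw [← Complex.mul_conj', hconj, add_comm]
    _ = y * Complex.I * (π / Complex.sin (π * (y * Complex.I))) := by
        rw [Complex.Gamma_add_one _ hyI, mul_assoc, Complex.Gamma_mul_Gamma_one_sub]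
    _ = π * y / Complex.sinh (π * y) := by
        rw [← mul_assoc (π : ℂ), Complex.sin_mul_I]
        field_simp [hsinh]

lemma norm_Gamma_one_add_mul_I_le (y : ℝ) :
    ‖Complex.Gamma (1 + y * Complex.I)‖ ≤ √2 * exp (-(π / 4) * |y|) := by
  rcases eq_or_ne y 0 with rfl | hy
  · simp [one_le_sqrt]
  refine le_of_sq_le_sq ?_ (by positivity)
  calc ‖Complex.Gamma (1 + y * Complex.I)‖ ^ 2 = π * y / sinh (π * y) :=
        norm_Gamma_one_add_mul_I_sq hy
    _ ≤ 2 * exp (-|π * y| / 2) := self_div_sinh_le _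
    _ = (√2 * exp (-(π / 4) * |y|)) ^ 2 := by
        rw [mul_pow, sq_sqrt zero_le_two, ← exp_nat_mul, abs_mul, abs_of_pos pi_pos]
        ring_nf

end Gamma

lemma fourier_exp_smul_comp_exp {E : Type*} [NormedAddCommGroup E] [NormedSpace ℂ E]
    (f : ℝ → E) (ξ : ℝ) :
    𝓕 (fun u => exp u • f (exp u)) ξ = mellin f (1 + (-(2 * π * ξ) : ℝ) * Complex.I) := by
  have hfreq : -(2 * π * ξ) / (2 * π) = -ξ := by field_simp
  rw [mellin_eq_fourier, ← neg_neg ξ, ← fourierInv_eq_fourier_neg, fourierInv_eq_fourier_comp_neg]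
  simp [hfreq]

/-- The integrand of `1 / l = ∫ exp (-l * t)`, `t > 0`, after the substitution `t = exp u`. It takes
complex values so that the Fourier transform applies to it. -/
noncomputable def expSubstIntegrand (l u : ℝ) : ℂ :=
  (exp u * exp (-exp u * l) : ℝ)

section ExpSubstIntegrand

variable {l : ℝ}

lemma continuous_expSubstIntegrand (l : ℝ) : Continuous (expSubstIntegrand l) := by
  unfold expSubstIntegrand
  fun_prop

lemma norm_expSubstIntegrand_le (hl : 0 < l) (u : ℝ) :
    ‖expSubstIntegrand l u‖ ≤ (1 + 2 / l ^ 2) * exp (-1 * |u|) := by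
  have hnorm : ‖expSubstIntegrand l u‖ = exp u * exp (-exp u * l) :=
    Complex.norm_of_nonneg (by positivity)
  rw [hnorm, neg_one_mul]
  rcases le_total 0 u with hu | hu
  · have hquad : (exp u * l) ^ 2 / 2 ≤ exp (exp u * l) := by
      simpa using pow_div_factorial_le_exp (exp u * l) (by positivity) 2
    calc exp u * exp (-exp u * l) = exp u / exp (exp u * l) := by
          rw [neg_mul, exp_neg, div_eq_mul_inv]
      _ ≤ exp u / ((exp u * l) ^ 2 / 2) := by gcongr
      _ = 2 / l ^ 2 * exp (-|u|) := by
          rw [abs_of_nonneg hu, exp_neg]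
          field_simp
      _ ≤ (1 + 2 / l ^ 2) * exp (-|u|) := by
          gcongr
          exact le_add_of_nonneg_left zero_le_one
  · have hdecay : exp (-exp u * l) ≤ 1 :=
      exp_le_one_iff.mpr (mul_nonpos_of_nonpos_of_nonneg (neg_nonpos.mpr (exp_nonneg u)) hl.le)
    rw [abs_of_nonpos hu, neg_neg, mul_comm]
    gcongr
    exact hdecay.trans (le_add_of_nonneg_right (by positivity))

lemma fourier_expSubstIntegrand (hl : 0 < l) (ξ : ℝ) :
    𝓕 (expSubstIntegrand l) ξ = (1 / l : ℂ) ^ (1 + (-(2 * π * ξ) : ℝ) * Complex.I) *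
      Complex.Gamma (1 + (-(2 * π * ξ) : ℝ) * Complex.I) := by
  have hintegrand : expSubstIntegrand l =
      fun u => exp u • (fun t : ℝ => Complex.exp (-(l * t))) (exp u) := by
    ext u
    simp [expSubstIntegrand, mul_comm]
  rw [hintegrand, fourier_exp_smul_comp_exp (fun t : ℝ => Complex.exp (-(l * t))), mellin,
    ← Complex.integral_cpow_mul_exp_neg_mul_Ioi (by simp) hl]
  rfl

lemma integral_expSubstIntegrand (hl : 0 < l) :
    ∫ u, expSubstIntegrand l u = (1 / l : ℝ) := by
  simpa [fourier_real_eq_integral_exp_smul] using fourier_expSubstIntegrand hl 0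

lemma norm_fourier_expSubstIntegrand_le (hl : 0 < l) (ξ : ℝ) :
    ‖𝓕 (expSubstIntegrand l) ξ‖ ≤ √2 / l * exp (-(π ^ 2 / 2) * |ξ|) := by
  have hcpow : ‖(1 / l : ℂ) ^ (1 + (-(2 * π * ξ) : ℝ) * Complex.I)‖ = 1 / l := by
    simpa using Complex.norm_cpow_eq_rpow_re_of_pos (one_div_pos.mpr hl)
      (1 + (-(2 * π * ξ) : ℝ) * Complex.I)
  rw [fourier_expSubstIntegrand hl, norm_mul, hcpow]
  calc 1 / l * ‖Complex.Gamma (1 + (-(2 * π * ξ) : ℝ) * Complex.I)‖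
      ≤ 1 / l * (√2 * exp (-(π / 4) * |-(2 * π * ξ)|)) := by
        gcongr
        exact norm_Gamma_one_add_mul_I_le _
    _ = √2 / l * exp (-(π ^ 2 / 2) * |ξ|) := by
        rw [abs_neg, abs_mul, abs_of_pos two_pi_pos]
        ring_nf

end ExpSubstIntegrand

theorem abs_one_div_sub_sum_sinc_quadrature_le {l h : ℝ} (hl : 0 < l) (hh : 0 < h) (N : ℕ) :
    |1 / l - ∑ k ∈ Finset.Icc (-(N : ℤ)) (N : ℤ), h * exp (k * h) * exp (-exp (k * h) * l)| ≤
      2 * (√2 / l) / (exp (π ^ 2 / 2 / h) - 1) + 2 * (1 + 2 / l ^ 2) * exp (-h * N) := by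
  have herror := norm_integral_sub_sum_trapezoid_le hh one_pos (by positivity)
    (continuous_expSubstIntegrand l) (norm_expSubstIntegrand_le hl)
    (norm_fourier_expSubstIntegrand_le hl) N
  rw [integral_expSubstIntegrand hl, div_one, neg_one_mul] at herror
  simp only [expSubstIntegrand] at herror
  simp only [mul_assoc] at herror ⊢
  exact_mod_cast herror

lemma one_div_exp_sub_one_le {x : ℝ} (hx : 1 ≤ x) : 1 / (exp x - 1) ≤ 2 * exp (-x) := by
  have hexp : 2 ≤ exp x := by linarith [add_one_le_exp x]
  calc 1 / (exp x - 1) ≤ 1 / (exp x / 2) := by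
        gcongr
        linarith
    _ = 2 * exp (-x) := by
        rw [exp_neg]
        field_simp

/-- Sinc-quadrature approximation of `1/λ = ∫₀^∞ e^{−λt} dt`: with `𝔥 = π/√M`,
`t_k = e^{k𝔥}`, `c_k = 𝔥 t_k`, the quadrature `Σ_{k=−M}^{M} c_k e^{−t_k λ}` approximates
`1/λ` uniformly on `[a,∞)` with error `≤ C e^{−β√M}`. -/
theorem sinc_quadrature_inverse_uniform
    (a : ℝ) (ha : 0 < a) :
    ∃ C β : ℝ, 0 < C ∧ 0 < β ∧
      ∀ M : ℕ, 1 ≤ M → ∀ l : ℝ, a ≤ l →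
        |1 / l - ∑ k ∈ Finset.Icc (-(M : ℤ)) (M : ℤ),
            (Real.pi / Real.sqrt M * Real.exp ((k : ℝ) * (Real.pi / Real.sqrt M))) *
              Real.exp (-(Real.exp ((k : ℝ) * (Real.pi / Real.sqrt M))) * l)| ≤
          C * Real.exp (-β * Real.sqrt M) := by
  refine ⟨4 * (√2 / a) + 2 * (1 + 2 / a ^ 2), π / 2, by positivity, by positivity,
    fun M hM l hl => ?_⟩
  have hsqrt : 1 ≤ √(M : ℝ) := one_le_sqrt.mpr (by exact_mod_cast hM)
  have hdisc_exponent : π ^ 2 / 2 / (π / √M) = π / 2 * √M := by field_simp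
  have htrunc_exponent : -(π / √M) * M = -π * √M := by
    rw [neg_mul, div_mul_eq_mul_div, mul_div_assoc, div_sqrt, neg_mul]
  have hdenom_pos : 0 < exp (π / 2 * √M) - 1 := sub_pos.mpr (one_lt_exp_iff.mpr (by positivity))
  have hdisc : 1 / (exp (π / 2 * √M) - 1) ≤ 2 * exp (-(π / 2) * √M) := by
    rw [neg_mul]
    exact one_div_exp_sub_one_le (by nlinarith [pi_gt_three])
  have htrunc : exp (-π * √M) ≤ exp (-(π / 2) * √M) := by
    gcongr
    linarith [pi_pos]
  refine (abs_one_div_sub_sum_sinc_quadrature_le (ha.trans_le hl) (by positivity) M).trans ?_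
  rw [hdisc_exponent, htrunc_exponent]
  calc _ ≤ 2 * (√2 / a) * (2 * exp (-(π / 2) * √M)) +
          2 * (1 + 2 / a ^ 2) * exp (-(π / 2) * √M) := by
        rw [← mul_one_div]
        gcongr
    _ = _ := by ring
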